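/- Let f : (A,d) → (B,d) be a morphism of commutative cochain algebras over ℚ such that H(A,d) is a Poincaré duality algebra. If H(f) is injective, then f admits a homotopy retraction as a morphism of (A,d)-modules: there exist an (A,d)-module (P,d), a quasi-isomorphism of (A,d)-modules ψ : (P,d) → (B,d), and morphisms of (A,d)-modules j : (A,d) → (P,d), ρ : (P,d) → (A,d) with ψ∘j = f and ρ∘j = id_A. -/

import Mathlib

/-- `(A,d)` together with the grading `𝒜` is a (nonnegatively graded) commutative cochain
algebra over `ℚ`: a graded-commutative graded `ℚ`-algebra with a degree `+1` differential
satisfying the Leibniz rule. -/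
structure IsGradedCDGA {A : Type} [Ring A] [Algebra ℚ A]
    (𝒜 : ℕ → Submodule ℚ A) (d : A →ₗ[ℚ] A) : Prop where
  internal : DirectSum.IsInternal 𝒜
  one_mem : (1 : A) ∈ 𝒜 0
  mul_mem : ∀ i j, ∀ a ∈ 𝒜 i, ∀ b ∈ 𝒜 j, a * b ∈ 𝒜 (i + j)
  gcomm : ∀ i j, ∀ a ∈ 𝒜 i, ∀ b ∈ 𝒜 j, a * b = ((-1 : ℚ) ^ (i * j)) • (b * a)
  dd : d ∘ₗ d = 0
  d_deg : ∀ i, ∀ a ∈ 𝒜 i, d a ∈ 𝒜 (i + 1)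
  leibniz : ∀ i, ∀ a ∈ 𝒜 i, ∀ b : A, d (a * b) = d a * b + ((-1 : ℚ) ^ i) • (a * d b)

/-- Cochain-level formulation of the statement that the cohomology `H(A,d)` is a Poincaré
duality algebra of formal dimension `n`, with fundamental class represented by the cocycle
`ω ∈ Aⁿ`. -/
structure CohomologyIsPDA {A : Type} [Ring A] [Algebra ℚ A]
    (𝒜 : ℕ → Submodule ℚ A) (d : A →ₗ[ℚ] A) (n : ℕ) (ω : A) : Prop where
  cocycle : d ω = 0
  mem : ω ∈ 𝒜 n
  not_exact : ω ∉ LinearMap.range d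
  bounded : ∀ p, n < p → ∀ a ∈ 𝒜 p, d a = 0 → a ∈ LinearMap.range d
  coh_zero : ∀ a ∈ 𝒜 0, d a = 0 → a ∈ Submodule.span ℚ {(1 : A)}
  top : ∀ a ∈ 𝒜 n, d a = 0 → a ∈ Submodule.span ℚ {ω} ⊔ LinearMap.range d
  findimH : ∃ V : Submodule ℚ A, FiniteDimensional ℚ V ∧
      LinearMap.ker d ≤ V ⊔ LinearMap.range d
  duality : ∀ p, p ≤ n → ∀ a ∈ 𝒜 p, d a = 0 → a ∉ LinearMap.range d →
      ∃ b ∈ 𝒜 (n - p), d b = 0 ∧ ∃ c : ℚ, c ≠ 0 ∧ a * b - c • ω ∈ LinearMap.range d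

/-- The map `φ : A → Hom(A,ℚ)`, `φ(a)(b) = ω♯(a·b)`, associated with a linear
functional `ω♯ : A → ℚ`. -/
noncomputable def pairingMap {A : Type} [Ring A] [Algebra ℚ A] (ωs : A →ₗ[ℚ] ℚ) :
    A →ₗ[ℚ] Module.Dual ℚ A :=
  (LinearMap.llcomp ℚ A A ℚ ωs).comp (LinearMap.mul ℚ A)

theorem pairingMap_apply {A : Type} [Ring A] [Algebra ℚ A] (ωs : A →ₗ[ℚ] ℚ) (a b : A) :
    pairingMap ωs a b = ωs (a * b) := rfl

/-- The action of a homogeneous element `a ∈ A^p` on a cohomogeneous functional `f` of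
degree `r`: `(a·f)(x) = (-1)^{|a||f|} f(a·x)`. -/
noncomputable def dualAct {A : Type} [Ring A] [Algebra ℚ A]
    (p : ℕ) (a : A) (r : ℤ) (f : Module.Dual ℚ A) : Module.Dual ℚ A :=
  ((-1 : ℚ) ^ ((p : ℤ) * r)) • (f ∘ₗ LinearMap.mulLeft ℚ a)

/-- The differential on `Hom(A,ℚ)` applied to a cohomogeneous functional `f` of degree `r`:
`δf = -(-1)^{|f|} f∘d`. -/
noncomputable def dualDelta {A : Type} [Ring A] [Algebra ℚ A]
    (d : A →ₗ[ℚ] A) (r : ℤ) (f : Module.Dual ℚ A) : Module.Dual ℚ A :=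
  (-(-1 : ℚ) ^ r) • (f ∘ₗ d)

/-- A functional `f : A → ℚ` is cohomogeneous of degree `r` (for a grading `𝒜` of `A`)
if it vanishes on `𝒜 j` for all `j ≠ -r`. -/
def Cohomogeneous {A : Type} [Ring A] [Algebra ℚ A]
    (𝒜 : ℕ → Submodule ℚ A) (r : ℤ) (f : Module.Dual ℚ A) : Prop :=
  ∀ j : ℕ, (j : ℤ) ≠ -r → ∀ x ∈ 𝒜 j, f x = 0

/-- An `(A,d)`-module: a cochain complex of `ℚ`-vector spaces with a compatible `A`-action,
satisfying the Leibniz rule `d(a·m) = da·m + (-1)^{|a|} a·dm` for homogeneous `a`. -/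
structure DGModule (A : Type) [Ring A] [Algebra ℚ A]
    (𝒜 : ℕ → Submodule ℚ A) (dA : A →ₗ[ℚ] A) where
  carrier : Type
  [acg : AddCommGroup carrier]
  [modQ : Module ℚ carrier]
  act : A →ₗ[ℚ] carrier →ₗ[ℚ] carrier
  act_one : ∀ m, act 1 m = m
  act_mul : ∀ a b m, act (a * b) m = act a (act b m)
  d : carrier →ₗ[ℚ] carrier
  dd : ∀ m, d (d m) = 0
  leibniz : ∀ p, ∀ a ∈ 𝒜 p, ∀ m,
    d (act a m) = act (dA a) m + ((-1 : ℚ) ^ p) • act a (d m)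

attribute [instance] DGModule.acg DGModule.modQ

variable {A : Type} [Ring A] [Algebra ℚ A] {𝒜 : ℕ → Submodule ℚ A} {dA : A →ₗ[ℚ] A}

/-- A morphism of `(A,d)`-modules: a `ℚ`-linear map commuting with the differentials and
with the `A`-actions. -/
structure IsDGModuleHom (M N : DGModule A 𝒜 dA) (f : M.carrier →ₗ[ℚ] N.carrier) : Prop where
  comm_d : ∀ m, f (M.d m) = N.d (f m)
  equivariant : ∀ a m, f (M.act a m) = N.act a (f m)

/-- Cocycles of an `(A,d)`-module. -/
def cocycles (M : DGModule A 𝒜 dA) : Submodule ℚ M.carrier := LinearMap.ker M.d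

/-- Coboundaries, as a submodule of the cocycles. -/
def coboundaries (M : DGModule A 𝒜 dA) : Submodule ℚ (cocycles M) :=
  (LinearMap.range M.d).comap (cocycles M).subtype

/-- The cohomology `H(M)` of an `(A,d)`-module. -/
def cohomology (M : DGModule A 𝒜 dA) := cocycles M ⧸ coboundaries M

noncomputable instance (M : DGModule A 𝒜 dA) : AddCommGroup (cohomology M) :=
  inferInstanceAs (AddCommGroup (cocycles M ⧸ coboundaries M))

noncomputable instance (M : DGModule A 𝒜 dA) : Module ℚ (cohomology M) :=
  inferInstanceAs (Module ℚ (cocycles M ⧸ coboundaries M))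

theorem maps_cocycles {M N : DGModule A 𝒜 dA} {f : M.carrier →ₗ[ℚ] N.carrier}
    (hf : IsDGModuleHom M N f) : ∀ x ∈ cocycles M, f x ∈ cocycles N := by
  intro x hx
  have h := hf.comm_d x
  simp only [cocycles, LinearMap.mem_ker] at hx ⊢
  rw [← h, hx, map_zero]

theorem maps_coboundaries {M N : DGModule A 𝒜 dA} {f : M.carrier →ₗ[ℚ] N.carrier}
    (hf : IsDGModuleHom M N f) :
    coboundaries M ≤ (coboundaries N).comap (f.restrict (maps_cocycles hf)) := by
  rintro ⟨x, hx⟩ hmem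
  obtain ⟨y, hy⟩ := hmem
  refine Submodule.mem_comap.2 ⟨f y, ?_⟩
  have : f x = N.d (f y) := by
    rw [← hf.comm_d, hy]; rfl
  simpa [LinearMap.restrict_apply] using this.symm

/-- The map induced in cohomology by a morphism of `(A,d)`-modules. -/
noncomputable def cohMap {M N : DGModule A 𝒜 dA} {f : M.carrier →ₗ[ℚ] N.carrier}
    (hf : IsDGModuleHom M N f) : cohomology M →ₗ[ℚ] cohomology N :=
  Submodule.mapQ (coboundaries M) (coboundaries N)
    (f.restrict (maps_cocycles hf)) (maps_coboundaries hf)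

/-- A morphism of `(A,d)`-modules is a quasi-isomorphism if the induced map in cohomology
is an isomorphism. -/
def IsQuasiIso {M N : DGModule A 𝒜 dA} {f : M.carrier →ₗ[ℚ] N.carrier}
    (hf : IsDGModuleHom M N f) : Prop :=
  Function.Bijective (cohMap hf)

/-- A commutative cochain algebra `(A,d)` viewed as a module over itself. -/
noncomputable def selfModule (hA : IsGradedCDGA 𝒜 dA) : DGModule A 𝒜 dA where
  carrier := A
  act := LinearMap.mul ℚ A
  act_one := fun m => one_mul m
  act_mul := fun a b m => mul_assoc a b m
  d := dA
  dd := fun m => by simpa using LinearMap.ext_iff.mp hA.dd m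
  leibniz := fun p a ha m => hA.leibniz p a ha m

/-- The target of a morphism `f : (A,d) → (B,d)` of commutative cochain algebras, viewed
as an `(A,d)`-module via `a·b = f(a)b`. -/
noncomputable def pushModule {B : Type} [Ring B] [Algebra ℚ B]
    {ℬ : ℕ → Submodule ℚ B} {dB : B →ₗ[ℚ] B} (hB : IsGradedCDGA ℬ dB)
    (f : A →ₐ[ℚ] B) (hfd : ∀ a, f (dA a) = dB (f a))
    (hfdeg : ∀ i, ∀ a ∈ 𝒜 i, f a ∈ ℬ i) : DGModule A 𝒜 dA where
  carrier := B
  act := (LinearMap.mul ℚ B).comp f.toLinearMap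
  act_one := fun m => by simp
  act_mul := fun a b m => by simp [mul_assoc]
  d := dB
  dd := fun m => by simpa using LinearMap.ext_iff.mp hB.dd m
  leibniz := fun p a ha m => by
    have h := hB.leibniz p (f a) (hfdeg p a ha) m
    simp only [LinearMap.comp_apply, LinearMap.mul_apply', AlgHom.toLinearMap_apply]
    rw [hfd]
    exact h

/-!
A functional `ε` on an `(A,d)`-module `M` that kills the coboundaries is the same thing as a
morphism `M → A^∨`, `m ↦ (x ↦ ε (x·m))`, into the dual module `A^∨ = Hom(A, ℚ)`. If `f : A → M`
does not kill the fundamental class `[ω]`, choose such an `ε` with `ε (f ω) ≠ 0`. The composite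
`A → M → A^∨` is then `a ↦ (x ↦ ε (f (x a)))`, which is a quasi-isomorphism by Poincaré duality.
Finally, whenever `g ∘ f` is a quasi-isomorphism, `f : L → M` has a homotopy retraction through
`P = L ⊕ F`, where `F` is the homotopy fibre of `g : M → N`: the map `P → M` is `f` on `L` and the
projection on `F`, and it is a quasi-isomorphism because `H(M) = H(L) ⊕ H(F)`.
-/

section Graded

theorem linearMap_ext_of_isInternal {ι R M N : Type*} [DecidableEq ι] [Semiring R]
    [AddCommMonoid M] [Module R M] [AddCommMonoid N] [Module R N] {ℳ : ι → Submodule R M}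
    (h : DirectSum.IsInternal ℳ) {u v : M →ₗ[R] N} (huv : ∀ i, ∀ a ∈ ℳ i, u a = v a) : u = v :=
  LinearMap.eqLocus_eq_top.1 <| top_le_iff.1 <|
    h.submodule_iSup_eq_top.symm.le.trans <| iSup_le huv

variable {R M : Type*} [Ring R] [AddCommGroup M] [Module R M]
  (ℳ : ℕ → Submodule R M) [DirectSum.Decomposition ℳ]

theorem mem_of_forall_decompose_mem {S : Submodule R M} {a : M}
    (h : ∀ i, (DirectSum.decompose ℳ a i : M) ∈ S) : a ∈ S := by
  classical
  rw [← DirectSum.sum_support_decompose ℳ a]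
  exact S.sum_mem fun i _ => h i

theorem coe_decompose_succ_map {d : M →ₗ[R] M} (hd : ∀ i, ∀ a ∈ ℳ i, d a ∈ ℳ (i + 1)) (i : ℕ)
    (a : M) : (DirectSum.decompose ℳ (d a) (i + 1) : M) = d (DirectSum.decompose ℳ a i) := by
  induction a using DirectSum.Decomposition.inductionOn ℳ with
  | zero => simp
  | add a b ha hb => simp [ha, hb]
  | @homogeneous j a =>
    obtain rfl | hij := eq_or_ne j i
    · simp [DirectSum.decompose_of_mem_same ℳ (hd j a a.2)]
    · rw [DirectSum.decompose_of_mem_ne ℳ (hd j a a.2) (by lia),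
        DirectSum.decompose_of_mem_ne ℳ a.2 hij, map_zero]

end Graded

section LinearDuality

open Module

variable {K V : Type*} [Field K] [AddCommGroup V] [Module K V]

theorem range_eq_dualAnnihilator_of_ker_le {W : Submodule K V} [FiniteDimensional K (V ⧸ W)]
    {θ : V →ₗ[K] Dual K V} (hker : LinearMap.ker θ ≤ W)
    (hrange : LinearMap.range θ ≤ W.dualAnnihilator) :
    LinearMap.range θ = W.dualAnnihilator := by
  have : FiniteDimensional K W.dualAnnihilator := Submodule.finite_dualAnnihilator_iff.2 ‹_›
  have : FiniteDimensional K (LinearMap.range θ) := Submodule.finiteDimensional_of_le hrange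
  have : FiniteDimensional K (V ⧸ LinearMap.ker θ) :=
    Module.Finite.equiv θ.quotKerEquivRange.symm
  refine Submodule.eq_of_le_of_finrank_le hrange ?_
  calc finrank K W.dualAnnihilator
      = finrank K (V ⧸ W) := by
        rw [← W.dualQuotEquivDualAnnihilator.finrank_eq, Subspace.dual_finrank_eq]
    _ ≤ finrank K (V ⧸ LinearMap.ker θ) :=
        LinearMap.finrank_le_finrank_of_surjective (Submodule.factor_surjective hker)
    _ = finrank K (LinearMap.range θ) := θ.quotKerEquivRange.finrank_eq

end LinearDuality

namespace IsGradedCDGA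

/-- The grading involution `a ↦ (-1)^|a| a`. It lets the Koszul signs be written for arbitrary,
not necessarily homogeneous, elements. -/
noncomputable def involution (hA : IsGradedCDGA 𝒜 dA) : A →ₗ[ℚ] A :=
  letI := hA.internal.chooseDecomposition
  DirectSum.toModule ℚ ℕ A (fun i => (-1 : ℚ) ^ i • (𝒜 i).subtype) ∘ₗ
    (DirectSum.decomposeLinearEquiv 𝒜).toLinearMap

variable (hA : IsGradedCDGA 𝒜 dA)
include hA

theorem d_d (a : A) : dA (dA a) = 0 :=
  LinearMap.congr_fun hA.dd a

theorem involution_of_mem {i : ℕ} {a : A} (ha : a ∈ 𝒜 i) :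
    hA.involution a = (-1 : ℚ) ^ i • a := by
  let := hA.internal.chooseDecomposition
  have hdec : DirectSum.decomposeLinearEquiv 𝒜 a = DirectSum.lof ℚ ℕ (fun i => 𝒜 i) i ⟨a, ha⟩ :=
    DirectSum.decompose_of_mem 𝒜 ha
  simp only [involution, LinearMap.comp_apply, LinearEquiv.coe_coe, hdec, DirectSum.toModule_lof,
    LinearMap.smul_apply, Submodule.subtype_apply]

theorem involution_one : hA.involution 1 = 1 := by
  simp [hA.involution_of_mem hA.one_mem]

theorem involution_involution (a : A) : hA.involution (hA.involution a) = a := by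
  refine LinearMap.congr_fun (f := hA.involution ∘ₗ hA.involution) (g := LinearMap.id)
    (linearMap_ext_of_isInternal hA.internal fun i a ha => ?_) a
  simp [hA.involution_of_mem ha, smul_smul, ← mul_pow]

theorem involution_d (a : A) : hA.involution (dA a) = -dA (hA.involution a) := by
  refine LinearMap.congr_fun (f := hA.involution ∘ₗ dA) (g := -(dA ∘ₗ hA.involution))
    (linearMap_ext_of_isInternal hA.internal fun i a ha => ?_) a
  simp [hA.involution_of_mem ha, hA.involution_of_mem (hA.d_deg i a ha), pow_succ]

theorem d_involution (a : A) : dA (hA.involution a) = -hA.involution (dA a) := by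
  rw [involution_d, neg_neg]

theorem involution_mul (a b : A) :
    hA.involution (a * b) = hA.involution a * hA.involution b := by
  suffices (LinearMap.mul ℚ A).compr₂ hA.involution =
      (LinearMap.mul ℚ A).compl₁₂ hA.involution hA.involution from
    LinearMap.congr_fun₂ this a b
  refine linearMap_ext_of_isInternal hA.internal fun i a ha =>
    linearMap_ext_of_isInternal hA.internal fun j b hb => ?_
  simp [hA.involution_of_mem ha, hA.involution_of_mem hb,
    hA.involution_of_mem (hA.mul_mem i j a ha b hb), pow_add, smul_smul, mul_comm]

end IsGradedCDGA

namespace DGModule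

theorem d_act (M : DGModule A 𝒜 dA) (hA : IsGradedCDGA 𝒜 dA) (a : A) (m : M.carrier) :
    M.d (M.act a m) = M.act (dA a) m + M.act (hA.involution a) (M.d m) := by
  refine LinearMap.congr_fun (f := M.d ∘ₗ M.act.flip m)
    (g := M.act.flip m ∘ₗ dA + M.act.flip (M.d m) ∘ₗ hA.involution)
    (linearMap_ext_of_isInternal hA.internal fun p a ha => ?_) a
  simp [M.leibniz p a ha, hA.involution_of_mem ha]

end DGModule

theorem IsGradedCDGA.d_mul (hA : IsGradedCDGA 𝒜 dA) (a b : A) :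
    dA (a * b) = dA a * b + hA.involution a * dA b :=
  (selfModule hA).d_act hA a b

theorem IsGradedCDGA.d_mul_mem_range (hA : IsGradedCDGA 𝒜 dA) (a : A) {b : A} (hb : dA b = 0) :
    dA a * b ∈ LinearMap.range dA :=
  ⟨a * b, by rw [hA.d_mul, hb, mul_zero, add_zero]⟩

theorem IsGradedCDGA.mul_mem_range (hA : IsGradedCDGA 𝒜 dA) {a b : A} (ha : dA a = 0)
    (hb : b ∈ LinearMap.range dA) : a * b ∈ LinearMap.range dA := by
  obtain ⟨y, rfl⟩ := hb
  refine ⟨hA.involution a * y, ?_⟩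
  rw [hA.d_mul, hA.d_involution, ha, map_zero, neg_zero, zero_mul, zero_add,
    hA.involution_involution]

section Morphisms

variable {L M N : DGModule A 𝒜 dA}

theorem IsDGModuleHom.comp {f : L.carrier →ₗ[ℚ] M.carrier} {g : M.carrier →ₗ[ℚ] N.carrier}
    (hg : IsDGModuleHom M N g) (hf : IsDGModuleHom L M f) : IsDGModuleHom L N (g ∘ₗ f) where
  comm_d m := by simp [hf.comm_d, hg.comm_d]
  equivariant a m := by simp [hf.equivariant, hg.equivariant]

theorem isDGModuleHom_pushModule {B : Type} [Ring B] [Algebra ℚ B] (hA : IsGradedCDGA 𝒜 dA)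
    {ℬ : ℕ → Submodule ℚ B} {dB : B →ₗ[ℚ] B} (hB : IsGradedCDGA ℬ dB)
    (f : A →ₐ[ℚ] B) (hfd : ∀ a, f (dA a) = dB (f a)) (hfdeg : ∀ i, ∀ a ∈ 𝒜 i, f a ∈ ℬ i) :
    IsDGModuleHom (selfModule hA) (pushModule hB f hfd hfdeg) f.toLinearMap where
  comm_d := hfd
  equivariant := map_mul f

theorem IsQuasiIso.congr {f f' : M.carrier →ₗ[ℚ] N.carrier} {hf : IsDGModuleHom M N f}
    {hf' : IsDGModuleHom M N f'} (h : IsQuasiIso hf) (hff' : f = f') : IsQuasiIso hf' := by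
  subst hff'
  exact h

variable {f : M.carrier →ₗ[ℚ] N.carrier} (hf : IsDGModuleHom M N f)

theorem cohMap_injective_iff : Function.Injective (cohMap hf) ↔
    ∀ m, M.d m = 0 → f m ∈ LinearMap.range N.d → m ∈ LinearMap.range M.d := by
  rw [← LinearMap.ker_eq_bot, LinearMap.ker_eq_bot']
  constructor
  · intro h m hm hfm
    exact (Submodule.Quotient.mk_eq_zero (coboundaries M)).1 <| h (Submodule.Quotient.mk ⟨m, hm⟩) <|
      (Submodule.Quotient.mk_eq_zero (coboundaries N)).2 hfm
  · intro h q hq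
    obtain ⟨⟨m, hm⟩, rfl⟩ := Submodule.Quotient.mk_surjective _ q
    exact (Submodule.Quotient.mk_eq_zero _).2 <| h m hm <|
      (Submodule.Quotient.mk_eq_zero (coboundaries N)).1 hq

theorem cohMap_surjective_iff : Function.Surjective (cohMap hf) ↔
    ∀ y, N.d y = 0 → ∃ m, M.d m = 0 ∧ f m - y ∈ LinearMap.range N.d := by
  constructor
  · intro h y hy
    obtain ⟨q, hq⟩ := h (Submodule.Quotient.mk ⟨y, hy⟩)
    obtain ⟨⟨m, hm⟩, rfl⟩ := Submodule.Quotient.mk_surjective _ q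
    exact ⟨m, hm, (Submodule.Quotient.eq (coboundaries N)).1 hq⟩
  · intro h q
    obtain ⟨⟨y, hy⟩, rfl⟩ := Submodule.Quotient.mk_surjective _ q
    obtain ⟨m, hm, hmy⟩ := h y hy
    exact ⟨Submodule.Quotient.mk ⟨m, hm⟩, (Submodule.Quotient.eq _).2 hmy⟩

end Morphisms

namespace DGModule

/-- The direct sum `M ⊕ N` of two `(A,d)`-modules. -/
noncomputable def prod (M N : DGModule A 𝒜 dA) : DGModule A 𝒜 dA where
  carrier := M.carrier × N.carrier
  act := LinearMap.prodMapLinear ℚ M.carrier N.carrier M.carrier N.carrier ℚ ∘ₗ M.act.prod N.act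
  act_one m := by simp [M.act_one, N.act_one]
  act_mul a b m := by simp [M.act_mul, N.act_mul]
  d := M.d.prodMap N.d
  dd m := by simp [M.dd, N.dd]
  leibniz p a ha m := by simp [M.leibniz p a ha, N.leibniz p a ha]

/-- The homotopy fibre of a morphism `g : M → N`, i.e. `M ⊕ s⁻¹N` with differential
`d(m, n) = (dm, g m - dn)`. On the desuspended summand `a` acts through `(-1)^|a| a`. -/
noncomputable def homotopyFiber (hA : IsGradedCDGA 𝒜 dA) {M N : DGModule A 𝒜 dA}
    {g : M.carrier →ₗ[ℚ] N.carrier} (hg : IsDGModuleHom M N g) : DGModule A 𝒜 dA where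
  carrier := M.carrier × N.carrier
  act := LinearMap.prodMapLinear ℚ M.carrier N.carrier M.carrier N.carrier ℚ ∘ₗ
    M.act.prod (N.act ∘ₗ hA.involution)
  act_one m := by simp [M.act_one, N.act_one, hA.involution_one]
  act_mul a b m := by simp [M.act_mul, N.act_mul, hA.involution_mul]
  d := (M.d ∘ₗ LinearMap.fst ℚ _ _).prod
    (g ∘ₗ LinearMap.fst ℚ _ _ - N.d ∘ₗ LinearMap.snd ℚ _ _)
  dd m := by simp [M.dd, N.dd, hg.comm_d]
  leibniz p a ha m := by
    refine Prod.ext (M.leibniz p a ha m.1) ?_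
    have hsign : (-1 : ℚ) ^ p • N.act (hA.involution a) = N.act a := by
      rw [hA.involution_of_mem ha, map_smul, smul_smul, ← mul_pow]
      simp
    change g (M.act a m.1) - N.d (N.act (hA.involution a) m.2) =
      N.act (hA.involution (dA a)) m.2 +
        ((-1 : ℚ) ^ p • N.act (hA.involution a)) (g m.1 - N.d m.2)
    rw [hsign, N.d_act hA, hA.d_involution, hA.involution_involution, hg.equivariant, map_sub,
      map_neg, LinearMap.neg_apply]
    abel

/-- The dual module `A^∨ = Hom(A, ℚ)` with action `(a·h)(x) = h(xa)` and differential
`(δh)(x) = (-1)^(|x|+1) h(dx)`. On cohomogeneous functionals these differ from `dualAct` and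
`dualDelta` by the signs `(-1)^|a|` and `-1`; in this form they need no degree for `h`. -/
noncomputable def dual (hA : IsGradedCDGA 𝒜 dA) : DGModule A 𝒜 dA where
  carrier := Module.Dual ℚ A
  act := (LinearMap.llcomp ℚ A A ℚ).flip ∘ₗ (LinearMap.mul ℚ A).flip
  act_one h := by ext; simp
  act_mul a b h := by ext; simp [mul_assoc]
  d := (hA.involution ∘ₗ dA).dualMap
  dd h := by ext; simp [hA.d_involution, hA.d_d]
  leibniz p a ha h := by
    ext x
    have hx : hA.involution (dA (x * hA.involution a)) =
        hA.involution (dA x) * a - x * dA a := by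
      rw [hA.d_mul, map_add, hA.involution_mul, hA.involution_mul, hA.involution_involution,
        hA.involution_involution, hA.d_involution, map_neg, hA.involution_involution, mul_neg,
        sub_eq_add_neg]
    have hsign : (-1 : ℚ) ^ p • h (hA.involution (dA (x * a))) =
        h (hA.involution (dA (x * hA.involution a))) := by
      simp [hA.involution_of_mem ha]
    change h (hA.involution (dA x) * a) =
      h (x * dA a) + (-1 : ℚ) ^ p • h (hA.involution (dA (x * a)))
    rw [hsign, hx, map_sub, add_sub_cancel]

theorem dual_d_eq_zero_iff (hA : IsGradedCDGA 𝒜 dA) {h : Module.Dual ℚ A} :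
    (dual hA).d h = 0 ↔ ∀ x, h (dA x) = 0 := by
  have hsurj : Function.Surjective hA.involution :=
    Function.Involutive.surjective hA.involution_involution
  change h ∘ₗ hA.involution ∘ₗ dA = 0 ↔ _
  rw [hsurj.forall]
  simp [LinearMap.ext_iff, hA.involution_d]

theorem mem_range_dual_d_iff (hA : IsGradedCDGA 𝒜 dA) {h : Module.Dual ℚ A} :
    h ∈ LinearMap.range (dual hA).d ↔ ∀ x, dA x = 0 → h x = 0 := by
  have hker : LinearMap.ker (hA.involution ∘ₗ dA) = LinearMap.ker dA :=
    LinearMap.ker_comp_of_ker_eq_bot _ <| LinearMap.ker_eq_bot.2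
      (Function.Involutive.injective hA.involution_involution)
  change h ∈ LinearMap.range (hA.involution ∘ₗ dA).dualMap ↔ _
  simp only [LinearMap.range_dualMap_eq_dualAnnihilator_ker, hker, Submodule.mem_dualAnnihilator,
    LinearMap.mem_ker]

/-- The map `M → A^∨`, `m ↦ (x ↦ ε (x·m))`, induced by a functional `ε` on `M`. -/
noncomputable def toDual (M : DGModule A 𝒜 dA) (ε : Module.Dual ℚ M.carrier) :
    M.carrier →ₗ[ℚ] Module.Dual ℚ A :=
  (M.act.compr₂ ε).flip

theorem toDual_apply (M : DGModule A 𝒜 dA) (ε : Module.Dual ℚ M.carrier) (m : M.carrier) (x : A) :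
    M.toDual ε m x = ε (M.act x m) := rfl

theorem isDGModuleHom_toDual (hA : IsGradedCDGA 𝒜 dA) (M : DGModule A 𝒜 dA)
    {ε : Module.Dual ℚ M.carrier} (hε : ∀ m, ε (M.d m) = 0) :
    IsDGModuleHom M (dual hA) (M.toDual ε) where
  comm_d m := LinearMap.ext fun x => by
    change ε (M.act x (M.d m)) = ε (M.act (hA.involution (dA x)) m)
    have h := hε (M.act (hA.involution x) m)
    rw [M.d_act hA, hA.involution_involution, hA.d_involution, map_neg, LinearMap.neg_apply,
      map_add, map_neg, neg_add_eq_zero] at h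
    exact h.symm
  equivariant a m := LinearMap.ext fun x => congrArg ε (M.act_mul x a m).symm

theorem toDual_comp {M N : DGModule A 𝒜 dA} {f : M.carrier →ₗ[ℚ] N.carrier}
    (hf : IsDGModuleHom M N f) (ε : Module.Dual ℚ N.carrier) :
    N.toDual ε ∘ₗ f = M.toDual (ε ∘ₗ f) := by
  refine LinearMap.ext fun m => LinearMap.ext fun x => ?_
  simp [toDual_apply, hf.equivariant]

end DGModule

/-- `f : M → N` admits a homotopy retraction: it factors as `ψ ∘ j` with `ψ` a
quasi-isomorphism and `j` a split monomorphism of `(A,d)`-modules. -/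
def HasHomotopyRetraction (M N : DGModule A 𝒜 dA) (f : M.carrier →ₗ[ℚ] N.carrier) : Prop :=
  ∃ (P : DGModule A 𝒜 dA) (j : M.carrier →ₗ[ℚ] P.carrier) (ρ : P.carrier →ₗ[ℚ] M.carrier)
    (ψ : P.carrier →ₗ[ℚ] N.carrier) (_ : IsDGModuleHom M P j) (_ : IsDGModuleHom P M ρ)
    (hψ : IsDGModuleHom P N ψ), IsQuasiIso hψ ∧ ψ ∘ₗ j = f ∧ ρ ∘ₗ j = LinearMap.id

section Retraction

variable {L M N : DGModule A 𝒜 dA} {f : L.carrier →ₗ[ℚ] M.carrier} {g : M.carrier →ₗ[ℚ] N.carrier}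

/-- The map `L ⊕ F → M` given by `f : L → M` and the projection to `M` of the homotopy
fibre `F` of `g : M → N`. -/
noncomputable def coprodFiberFst (hA : IsGradedCDGA 𝒜 dA) (f : L.carrier →ₗ[ℚ] M.carrier)
    (hg : IsDGModuleHom M N g) :
    (L.prod (DGModule.homotopyFiber hA hg)).carrier →ₗ[ℚ] M.carrier :=
  f.coprod (LinearMap.fst ℚ M.carrier N.carrier)

theorem isDGModuleHom_coprodFiberFst (hA : IsGradedCDGA 𝒜 dA) (hf : IsDGModuleHom L M f)
    (hg : IsDGModuleHom M N g) :
    IsDGModuleHom (L.prod (DGModule.homotopyFiber hA hg)) M (coprodFiberFst hA f hg) where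
  comm_d p := by
    change f (L.d p.1) + M.d p.2.1 = M.d (f p.1 + p.2.1)
    rw [map_add, hf.comm_d]
  equivariant a p := by
    change f (L.act a p.1) + M.act a p.2.1 = M.act a (f p.1 + p.2.1)
    rw [map_add, hf.equivariant]

theorem isQuasiIso_coprodFiberFst (hA : IsGradedCDGA 𝒜 dA) (hf : IsDGModuleHom L M f)
    (hg : IsDGModuleHom M N g) (hgf : IsQuasiIso (hg.comp hf)) :
    IsQuasiIso (isDGModuleHom_coprodFiberFst hA hf hg) := by
  have hinj := (cohMap_injective_iff (hg.comp hf)).1 hgf.injective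
  have hsurj := (cohMap_surjective_iff (hg.comp hf)).1 hgf.surjective
  refine ⟨(cohMap_injective_iff _).2 ?_, (cohMap_surjective_iff _).2 ?_⟩
  · rintro ⟨l, m, n⟩ hcocycle ⟨β, hβ : M.d β = f l + m⟩
    have hl : L.d l = 0 := congrArg Prod.fst hcocycle
    have hn : g m - N.d n = 0 := congrArg (fun p => p.2.2) hcocycle
    have hgfl : g (f l) = N.d (g β - n) := by
      rw [map_sub, ← hg.comm_d, hβ, map_add, ← sub_eq_zero.1 hn, add_sub_cancel_right]
    obtain ⟨α, rfl⟩ := hinj l hl ⟨_, hgfl.symm⟩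
    have hm : M.d (β - f α) = m := by
      rw [map_sub, hβ, hf.comm_d, add_sub_cancel_left]
    have hcycle : N.d (n - g (β - f α)) = 0 := by
      rw [map_sub, ← hg.comm_d, hm, ← neg_sub, hn, neg_zero]
    obtain ⟨l', hl', ν, hν : N.d ν = g (f l') - (n - g (β - f α))⟩ := hsurj _ hcycle
    refine ⟨(α, β - f α + f l', ν), Prod.ext rfl (Prod.ext ?_ ?_)⟩
    · change M.d (β - f α + f l') = m
      rw [map_add, hm, ← hf.comm_d, hl', map_zero, add_zero]
    · change g (β - f α + f l') - N.d ν = n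
      rw [hν, map_add]
      abel
  · intro m hm
    obtain ⟨l, hl, n, hn : N.d n = g (f l) - g m⟩ :=
      hsurj (g m) (by rw [← hg.comm_d, hm, map_zero])
    refine ⟨(l, m - f l, -n), Prod.ext hl (Prod.ext ?_ ?_), ?_⟩
    · change M.d (m - f l) = 0
      rw [map_sub, hm, ← hf.comm_d, hl, map_zero, sub_zero]
    · change g (m - f l) - N.d (-n) = 0
      rw [map_neg, hn, map_sub]
      abel
    · change f l + (m - f l) - m ∈ LinearMap.range M.d
      simp

theorem HasHomotopyRetraction.of_isQuasiIso_comp (hA : IsGradedCDGA 𝒜 dA)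
    (hf : IsDGModuleHom L M f) (hg : IsDGModuleHom M N g) (hgf : IsQuasiIso (hg.comp hf)) :
    HasHomotopyRetraction L M f := by
  let F := DGModule.homotopyFiber hA hg
  have hj : IsDGModuleHom L (L.prod F) (LinearMap.inl ℚ L.carrier F.carrier) :=
    ⟨fun l => Prod.ext rfl (map_zero F.d).symm, fun a l => Prod.ext rfl (map_zero (F.act a)).symm⟩
  have hρ : IsDGModuleHom (L.prod F) L (LinearMap.fst ℚ L.carrier F.carrier) :=
    ⟨fun _ => rfl, fun _ _ => rfl⟩
  exact ⟨L.prod F, _, _, coprodFiberFst hA f hg, hj, hρ, isDGModuleHom_coprodFiberFst hA hf hg,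
    isQuasiIso_coprodFiberFst hA hf hg hgf, LinearMap.coprod_inl .., LinearMap.fst_comp_inl ..⟩

end Retraction

namespace CohomologyIsPDA

variable {n : ℕ} {ω : A}

theorem finiteDimensional_cohomology (hA : IsGradedCDGA 𝒜 dA) (hPD : CohomologyIsPDA 𝒜 dA n ω) :
    FiniteDimensional ℚ (cohomology (selfModule hA)) := by
  obtain ⟨V, hV, hker⟩ := hPD.findimH
  let i : ↥(V ⊓ LinearMap.ker dA) →ₗ[ℚ] cocycles (selfModule hA) :=
    Submodule.inclusion inf_le_right
  refine Module.Finite.of_surjective ((coboundaries (selfModule hA)).mkQ ∘ₗ i) fun q => ?_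
  obtain ⟨⟨x, hx⟩, rfl⟩ := Submodule.Quotient.mk_surjective _ q
  obtain ⟨v, hv, _, ⟨y, rfl⟩, rfl⟩ := Submodule.mem_sup.1 (hker hx)
  have hdv : dA v = 0 := by
    have h : dA (v + dA y) = 0 := hx
    rwa [map_add, hA.d_d, add_zero] at h
  have hdiff : v - (v + dA y) ∈ LinearMap.range dA := ⟨-y, by rw [map_neg]; abel⟩
  exact ⟨⟨v, hv, hdv⟩, (Submodule.Quotient.eq _).2 hdiff⟩

theorem mul_sub_decompose_mem_range [DirectSum.Decomposition 𝒜] (hA : IsGradedCDGA 𝒜 dA)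
    (hPD : CohomologyIsPDA 𝒜 dA n ω) {p : ℕ} {a b : A} (ha : dA a = 0)
    (hlow : ∀ q < p, (DirectSum.decompose 𝒜 a q : A) ∈ LinearMap.range dA)
    (hb : b ∈ 𝒜 (n - p)) (hdb : dA b = 0) :
    b * (a - DirectSum.decompose 𝒜 a p) ∈ LinearMap.range dA := by
  suffices a - DirectSum.decompose 𝒜 a p ∈ (LinearMap.range dA).comap (LinearMap.mulLeft ℚ b) from
    this
  refine mem_of_forall_decompose_mem 𝒜 fun q => ?_
  have hmem := (DirectSum.decompose 𝒜 a p).2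
  rw [DirectSum.decompose_sub, DirectSum.sub_apply, Submodule.coe_sub]
  obtain rfl | hpq := eq_or_ne p q
  · rw [DirectSum.decompose_of_mem_same 𝒜 hmem, sub_self]
    exact zero_mem _
  rw [DirectSum.decompose_of_mem_ne 𝒜 hmem hpq, sub_zero, Submodule.mem_comap,
    LinearMap.mulLeft_apply]
  obtain hlt | hgt := hpq.symm.lt_or_gt
  · exact hA.mul_mem_range hdb (hlow q hlt)
  · have hdq : dA (DirectSum.decompose 𝒜 a q) = 0 := by
      rw [← coe_decompose_succ_map 𝒜 hA.d_deg, ha]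
      simp
    refine hPD.bounded (n - p + q) (by lia) _ (hA.mul_mem _ _ b hb _ (SetLike.coe_mem _)) ?_
    rw [hA.d_mul, hdb, hdq, zero_mul, mul_zero, add_zero]

/-- The class `b` is dual to the lowest-degree component of `a` that is not exact: `b` times the
lower components is exact, and `b` times the higher ones lies above the top degree. -/
theorem exists_mul_sub_smul_mem_range (hA : IsGradedCDGA 𝒜 dA) (hPD : CohomologyIsPDA 𝒜 dA n ω)
    {a : A} (ha : dA a = 0) (hna : a ∉ LinearMap.range dA) :
    ∃ b, dA b = 0 ∧ ∃ c : ℚ, c ≠ 0 ∧ b * a - c • ω ∈ LinearMap.range dA := by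
  classical
  let := hA.internal.chooseDecomposition
  have hex : ∃ p, (DirectSum.decompose 𝒜 a p : A) ∉ LinearMap.range dA := by
    contrapose! hna
    exact mem_of_forall_decompose_mem 𝒜 hna
  obtain ⟨p, hp, hlow⟩ : ∃ p, (DirectSum.decompose 𝒜 a p : A) ∉ LinearMap.range dA ∧
      ∀ q < p, (DirectSum.decompose 𝒜 a q : A) ∈ LinearMap.range dA :=
    ⟨Nat.find hex, Nat.find_spec hex, fun q hq => not_not.1 (Nat.find_min hex hq)⟩
  have hmem : (DirectSum.decompose 𝒜 a p : A) ∈ 𝒜 p := SetLike.coe_mem _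
  have hdp : dA (DirectSum.decompose 𝒜 a p) = 0 := by
    rw [← coe_decompose_succ_map 𝒜 hA.d_deg, ha]
    simp
  have hpn : p ≤ n := not_lt.1 fun h => hp (hPD.bounded p h _ hmem hdp)
  obtain ⟨b, hb, hdb, c, hc, hdual⟩ := hPD.duality p hpn _ hmem hdp hp
  refine ⟨b, hdb, (-1) ^ ((n - p) * p) * c, by simpa using hc, ?_⟩
  have hsplit : b * a - ((-1 : ℚ) ^ ((n - p) * p) * c) • ω =
      (-1 : ℚ) ^ ((n - p) * p) • (DirectSum.decompose 𝒜 a p * b - c • ω) +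
        b * (a - DirectSum.decompose 𝒜 a p) := by
    rw [smul_sub, ← hA.gcomm _ _ b hb _ hmem, smul_smul, mul_sub]
    abel
  rw [hsplit]
  exact add_mem (Submodule.smul_mem _ _ hdual)
    (hPD.mul_sub_decompose_mem_range hA ha hlow hb hdb)

variable {l : Module.Dual ℚ A}

theorem mem_range_of_forall_mul_eq_zero (hA : IsGradedCDGA 𝒜 dA) (hPD : CohomologyIsPDA 𝒜 dA n ω)
    (hl : ∀ a, l (dA a) = 0) (hω : l ω ≠ 0) {a : A} (ha : dA a = 0)
    (h : ∀ x, dA x = 0 → l (x * a) = 0) : a ∈ LinearMap.range dA := by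
  by_contra hna
  obtain ⟨b, hdb, c, hc, y, hy⟩ := hPD.exists_mul_sub_smul_mem_range hA ha hna
  have hcω : c * l ω = 0 := by
    simpa [hy, h b hdb] using hl y
  exact mul_ne_zero hc hω hcω

theorem exists_forall_mul_eq (hA : IsGradedCDGA 𝒜 dA) (hPD : CohomologyIsPDA 𝒜 dA n ω)
    (hl : ∀ a, l (dA a) = 0) (hω : l ω ≠ 0) {μ : Module.Dual ℚ A} (hμ : ∀ a, μ (dA a) = 0) :
    ∃ a, dA a = 0 ∧ ∀ x, dA x = 0 → l (x * a) = μ x := by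
  let Z : Submodule ℚ A := LinearMap.ker dA
  let R : Submodule ℚ Z := (LinearMap.range dA).comap Z.subtype
  let θ : Z →ₗ[ℚ] Module.Dual ℚ Z := ((LinearMap.mul ℚ A).compr₂ l).flip.domRestrict₁₂ Z Z
  have : FiniteDimensional ℚ (Z ⧸ R) := hPD.finiteDimensional_cohomology hA
  have hker : LinearMap.ker θ ≤ R := fun a ha =>
    hPD.mem_range_of_forall_mul_eq_zero hA hl hω a.2 fun x hx =>
      LinearMap.congr_fun (LinearMap.mem_ker.1 ha) ⟨x, hx⟩
  have hrange : LinearMap.range θ ≤ R.dualAnnihilator := by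
    rintro _ ⟨a, rfl⟩
    refine (Submodule.mem_dualAnnihilator _).2 ?_
    rintro ⟨_, _⟩ ⟨y, rfl⟩
    obtain ⟨z, hz⟩ := hA.d_mul_mem_range y a.2
    change l (dA y * a) = 0
    rw [← hz, hl]
  have hμR : μ ∘ₗ Z.subtype ∈ R.dualAnnihilator := by
    refine (Submodule.mem_dualAnnihilator _).2 ?_
    rintro ⟨_, _⟩ ⟨y, rfl⟩
    exact hμ y
  rw [← range_eq_dualAnnihilator_of_ker_le hker hrange] at hμR
  obtain ⟨a, ha⟩ := hμR
  exact ⟨a, a.2, fun x hx => LinearMap.congr_fun ha ⟨x, hx⟩⟩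

theorem isQuasiIso_toDual (hA : IsGradedCDGA 𝒜 dA) (hPD : CohomologyIsPDA 𝒜 dA n ω)
    (hl : ∀ a, l (dA a) = 0) (hω : l ω ≠ 0) :
    IsQuasiIso (DGModule.isDGModuleHom_toDual hA (selfModule hA) hl) := by
  refine ⟨(cohMap_injective_iff _).2 fun a ha hda => ?_, (cohMap_surjective_iff _).2 fun μ hμ => ?_⟩
  · exact hPD.mem_range_of_forall_mul_eq_zero hA hl hω ha
      ((DGModule.mem_range_dual_d_iff hA).1 hda)
  · obtain ⟨a, ha, hμa⟩ :=
      hPD.exists_forall_mul_eq hA hl hω ((DGModule.dual_d_eq_zero_iff hA).1 hμ)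
    exact ⟨a, ha, (DGModule.mem_range_dual_d_iff hA).2 fun x hx => sub_eq_zero.2 (hμa x hx)⟩

end CohomologyIsPDA

theorem homotopy_retraction_of_coh_injective_general (hA : IsGradedCDGA 𝒜 dA) {n : ℕ} {ω : A}
    (hPD : CohomologyIsPDA 𝒜 dA n ω) {M : DGModule A 𝒜 dA} {f : A →ₗ[ℚ] M.carrier}
    (hf : IsDGModuleHom (selfModule hA) M f) (hω : f ω ∉ LinearMap.range M.d) :
    HasHomotopyRetraction (selfModule hA) M f := by
  obtain ⟨ε, hεω, hker⟩ := Submodule.exists_le_ker_of_notMem hω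
  have hε (m : M.carrier) : ε (M.d m) = 0 := hker ⟨m, rfl⟩
  have hεf (a : A) : (ε ∘ₗ f) (dA a) = 0 := (congrArg ε (hf.comm_d a)).trans (hε _)
  refine .of_isQuasiIso_comp hA hf (DGModule.isDGModuleHom_toDual hA M hε) ?_
  exact (hPD.isQuasiIso_toDual hA hεf hεω).congr (DGModule.toDual_comp hf ε).symm

/-- Let `f : (A,d) → (B,d)` be a morphism of commutative cochain algebras such that
`H(A,d)` is a Poincaré duality algebra.  If `H(f)` is injective, then `f` admits a
homotopy retraction as a morphism of `(A,d)`-modules: there are an `(A,d)`-module `P`,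
a quasi-isomorphism of `(A,d)`-modules `ψ : P → B` and morphisms of `(A,d)`-modules
`j : A → P`, `ρ : P → A` with `ψ∘j = f` and `ρ∘j = id`. -/
theorem homotopy_retraction_of_coh_injective {B : Type} [Ring B] [Algebra ℚ B]
    (hA : IsGradedCDGA 𝒜 dA)
    {ℬ : ℕ → Submodule ℚ B} {dB : B →ₗ[ℚ] B} (hB : IsGradedCDGA ℬ dB)
    (f : A →ₐ[ℚ] B) (hfd : ∀ a, f (dA a) = dB (f a))
    (hfdeg : ∀ i, ∀ a ∈ 𝒜 i, f a ∈ ℬ i)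
    (n : ℕ) (ω : A) (hPD : CohomologyIsPDA 𝒜 dA n ω)
    (hinj : ∀ a, dA a = 0 → f a ∈ LinearMap.range dB → a ∈ LinearMap.range dA) :
    ∃ (P : DGModule A 𝒜 dA)
      (j : (selfModule hA).carrier →ₗ[ℚ] P.carrier)
      (ρ : P.carrier →ₗ[ℚ] (selfModule hA).carrier)
      (ψ : P.carrier →ₗ[ℚ] (pushModule hB f hfd hfdeg).carrier)
      (_ : IsDGModuleHom (selfModule hA) P j)
      (_ : IsDGModuleHom P (selfModule hA) ρ)
      (hψ : IsDGModuleHom P (pushModule hB f hfd hfdeg) ψ),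
      IsQuasiIso hψ ∧ ψ ∘ₗ j = f.toLinearMap ∧ ρ ∘ₗ j = LinearMap.id :=
  homotopy_retraction_of_coh_injective_general hA hPD
    (isDGModuleHom_pushModule hA hB f hfd hfdeg) fun h => hPD.not_exact (hinj ω hPD.cocycle h)
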